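/- arXiv:2401.17012 — 7 statements merged into one kernel-verified Lean document; each statement's English description precedes it below -/
import Mathlib

section
/- Let f and g be nonzero polynomials over ℝ with natDegree f ≠ natDegree g. Then the leading coefficient of f·g′ − g·f′ equals (natDegree g − natDegree f)·(leadingCoeff f)·(leadingCoeff g). -/
open Polynomial

theorem bracket_aux (p q : ℝ[X]) (N : ℕ) (h : N + 1 = p.natDegree + q.natDegree) :
    (p * derivative q).natDegree ≤ N ∧
      (p * derivative q).coeff N = (q.natDegree : ℝ) * p.leadingCoeff * q.leadingCoeff := by
  rcases hq : q.natDegree with _ | m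
  · rw [derivative_of_natDegree_zero hq]
    simp
  · have hN : N = p.natDegree + m := by omega
    have hd : (derivative q).natDegree ≤ m := by
      have := natDegree_derivative_le q
      omega
    subst hN
    refine ⟨natDegree_mul_le_of_le le_rfl hd, ?_⟩
    rw [coeff_mul_add_eq_of_natDegree_le le_rfl hd, coeff_derivative, leadingCoeff, leadingCoeff, hq]
    push_cast
    ring

theorem bracket_leadingCoeff
    (f g : ℝ[X]) (hf : f ≠ 0) (hg : g ≠ 0)
    (hdeg : f.natDegree ≠ g.natDegree) :
    (f * derivative g - g * derivative f).leadingCoeff =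
      ((g.natDegree : ℝ) - (f.natDegree : ℝ)) * f.leadingCoeff * g.leadingCoeff := by
  obtain ⟨N, hN⟩ : ∃ N, N + 1 = f.natDegree + g.natDegree :=
    ⟨f.natDegree + g.natDegree - 1, by omega⟩
  obtain ⟨h1, h2⟩ := bracket_aux f g N hN
  obtain ⟨h3, h4⟩ := bracket_aux g f N (by omega)
  have hc : (f * derivative g - g * derivative f).coeff N =
      ((g.natDegree : ℝ) - (f.natDegree : ℝ)) * f.leadingCoeff * g.leadingCoeff := by
    rw [coeff_sub, h2, h4]
    ring
  have hne : ((g.natDegree : ℝ) - (f.natDegree : ℝ)) * f.leadingCoeff * g.leadingCoeff ≠ 0 := by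
    refine mul_ne_zero (mul_ne_zero (sub_ne_zero.2 ?_) (leadingCoeff_ne_zero.2 hf))
      (leadingCoeff_ne_zero.2 hg)
    exact_mod_cast hdeg.symm
  have hle : (f * derivative g - g * derivative f).natDegree ≤ N :=
    natDegree_sub_le_of_le h1 h3 |>.trans (by simp)
  have heq : (f * derivative g - g * derivative f).natDegree = N :=
    natDegree_eq_of_le_of_coeff_ne_zero hle (by rw [hc]; exact hne)
  rw [leadingCoeff, heq, hc]
end

section
/- Let S be an ℝ-submodule of the polynomial ring ℝ[x] that is closed under the bracket ⁅f, g⁆ := f·g′ − g·f′. If S contains two polynomials f and g with natDegree f ≥ 2, natDegree g ≥ 2, and natDegree f ≠ natDegree g, then for every natural number N there exists a polynomial h ∈ S with natDegree h > N; in particular S is not finite-dimensional over ℝ. -/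
open Polynomial

theorem bracket_deg_aux (f h : ℝ[X]) (hf : 2 ≤ f.natDegree) (hlt : f.natDegree < h.natDegree) :
    h.natDegree < (f * derivative h - h * derivative f).natDegree := by
  obtain ⟨a, ha⟩ : ∃ a, f.natDegree = a + 1 := ⟨f.natDegree - 1, by omega⟩
  obtain ⟨b, hb⟩ : ∃ b, h.natDegree = b + 1 := ⟨h.natDegree - 1, by omega⟩
  have hf0 : f.leadingCoeff ≠ 0 := by
    rw [Ne, leadingCoeff_eq_zero]; rintro rfl; simp at hf
  have hh0 : h.leadingCoeff ≠ 0 := by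
    rw [Ne, leadingCoeff_eq_zero]; rintro rfl; simp at hlt
  rw [leadingCoeff, ha] at hf0
  rw [leadingCoeff, hb] at hh0
  have h1 : (f * derivative h).coeff ((a + 1) + b) = f.coeff (a + 1) * (derivative h).coeff b :=
    coeff_mul_add_eq_of_natDegree_le ha.le ((natDegree_derivative_le h).trans (by omega))
  have h2 : (h * derivative f).coeff ((b + 1) + a) = h.coeff (b + 1) * (derivative f).coeff a :=
    coeff_mul_add_eq_of_natDegree_le hb.le ((natDegree_derivative_le f).trans (by omega))
  rw [show b + 1 + a = a + 1 + b by omega] at h2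
  have h3 : (f * derivative h - h * derivative f).coeff (a + 1 + b) ≠ 0 := by
    rw [coeff_sub, h1, h2, coeff_derivative, coeff_derivative]
    have hab : (b : ℝ) - a ≠ 0 := by
      have : (a : ℝ) < b := by exact_mod_cast (by omega : a < b)
      linarith
    have := mul_ne_zero (mul_ne_zero hf0 hh0) hab
    intro h
    apply this
    linear_combination h
  have := le_natDegree_of_ne_zero h3
  omega

theorem bracket_unbounded_aux (S : Submodule ℝ ℝ[X])
    (hclosed : ∀ f ∈ S, ∀ g ∈ S, f * derivative g - g * derivative f ∈ S)
    (f g : ℝ[X]) (hfS : f ∈ S) (hgS : g ∈ S)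
    (hf2 : 2 ≤ f.natDegree) (hlt : f.natDegree < g.natDegree) (N : ℕ) :
    ∃ h ∈ S, N < h.natDegree ∧ f.natDegree < h.natDegree := by
  induction N with
  | zero => exact ⟨g, hgS, by omega, hlt⟩
  | succ n ih =>
    obtain ⟨h, hS, h1, h2⟩ := ih
    have := bracket_deg_aux f h hf2 h2
    exact ⟨_, hclosed f hfS h hS, by omega, by omega⟩

theorem bracket_closed_two_degrees_infinite_dim
    (S : Submodule ℝ ℝ[X])
    (hclosed : ∀ f ∈ S, ∀ g ∈ S, f * derivative g - g * derivative f ∈ S)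
    (f g : ℝ[X]) (hfS : f ∈ S) (hgS : g ∈ S)
    (hf2 : 2 ≤ f.natDegree) (hg2 : 2 ≤ g.natDegree)
    (hne : f.natDegree ≠ g.natDegree) :
    (∀ N : ℕ, ∃ h ∈ S, N < h.natDegree) ∧ ¬ FiniteDimensional ℝ S := by
  have key : ∀ N : ℕ, ∃ h ∈ S, N < h.natDegree := by
    intro N
    rcases lt_or_gt_of_ne hne with hl | hl
    · obtain ⟨h, hS, h1, _⟩ := bracket_unbounded_aux S hclosed f g hfS hgS hf2 hl N
      exact ⟨h, hS, h1⟩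
    · obtain ⟨h, hS, h1, _⟩ := bracket_unbounded_aux S hclosed g f hgS hfS hg2 hl N
      exact ⟨h, hS, h1⟩
  refine ⟨key, fun hfin => ?_⟩
  have hfg : S.FG := Module.Finite.iff_fg.mp hfin
  obtain ⟨s, hs⟩ := hfg
  obtain ⟨n, hn⟩ := span_of_finite_le_degreeLT (R := ℝ) s.finite_toSet
  obtain ⟨h, hS, h1⟩ := key n
  rw [hs] at hn
  have h2 := mem_degreeLT.mp (hn hS)
  have h3 : h.natDegree ≤ n := natDegree_le_of_degree_le h2.le
  omega
end

section
/- Let S be an ℝ-submodule of the polynomial ring ℝ[x] that is closed under the bracket ⁅f, g⁆ := f·g′ − g·f′. Then S is infinite-dimensional over ℝ if and only if there exist f, g ∈ S with natDegree f ≥ 2, natDegree g ≥ 2, and natDegree f ≠ natDegree g. -/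
open Polynomial

lemma bracket_coeff (f g : ℝ[X]) (hf : 2 ≤ f.natDegree) (hg : 2 ≤ g.natDegree)
    (h : f.natDegree ≠ g.natDegree) :
    (f * derivative g - g * derivative f).coeff (f.natDegree + g.natDegree - 1) ≠ 0 := by
  have e1 : (f * derivative g).coeff (f.natDegree + (g.natDegree - 1)) = _ :=
    coeff_mul_add_eq_of_natDegree_le le_rfl (natDegree_derivative_le g)
  have e2 : (g * derivative f).coeff (g.natDegree + (f.natDegree - 1)) = _ :=
    coeff_mul_add_eq_of_natDegree_le le_rfl (natDegree_derivative_le f)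
  rw [coeff_derivative, show g.natDegree - 1 + 1 = g.natDegree by omega] at e1
  rw [coeff_derivative, show f.natDegree - 1 + 1 = f.natDegree by omega] at e2
  rw [show f.natDegree + (g.natDegree - 1) = f.natDegree + g.natDegree - 1 by omega] at e1
  rw [show g.natDegree + (f.natDegree - 1) = f.natDegree + g.natDegree - 1 by omega] at e2
  rw [coeff_sub, e1, e2, Nat.cast_sub (by omega), Nat.cast_sub (by omega)]
  have hf0 : f.leadingCoeff ≠ 0 := by
    rw [leadingCoeff_ne_zero]; rintro rfl; simp at hf
  have hg0 : g.leadingCoeff ≠ 0 := by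
    rw [leadingCoeff_ne_zero]; rintro rfl; simp at hg
  have hne : (g.natDegree : ℝ) - f.natDegree ≠ 0 := by
    rw [sub_ne_zero]; exact_mod_cast h.symm
  have : f.leadingCoeff * g.leadingCoeff * ((g.natDegree : ℝ) - f.natDegree) ≠ 0 :=
    mul_ne_zero (mul_ne_zero hf0 hg0) hne
  convert this using 1
  simp only [coeff_natDegree]
  push_cast
  ring

lemma fin_of_bound (S : Submodule ℝ ℝ[X]) (N : ℕ) (h : ∀ f ∈ S, f.natDegree < N) :
    FiniteDimensional ℝ S := by
  have hle : S ≤ degreeLT ℝ N := by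
    intro f hf
    rw [mem_degreeLT]
    exact lt_of_le_of_lt degree_le_natDegree (by exact_mod_cast h f hf)
  haveI : FiniteDimensional ℝ (degreeLT ℝ N) := Module.Finite.equiv (degreeLTEquiv ℝ N).symm
  exact Submodule.finiteDimensional_of_le hle

theorem infinite_dim_iff_two_distinct_high_degrees
    (S : Submodule ℝ ℝ[X])
    (hclosed : ∀ f ∈ S, ∀ g ∈ S, f * derivative g - g * derivative f ∈ S) :
    ¬ FiniteDimensional ℝ S ↔
      ∃ f ∈ S, ∃ g ∈ S, 2 ≤ f.natDegree ∧ 2 ≤ g.natDegree ∧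
        f.natDegree ≠ g.natDegree := by
  constructor
  · intro h
    by_contra hc
    push Not at hc
    apply h
    by_cases hex : ∃ f ∈ S, 2 ≤ f.natDegree
    · obtain ⟨f, hf, hd⟩ := hex
      refine fin_of_bound S (f.natDegree + 1) fun g hg => ?_
      by_cases h2 : 2 ≤ g.natDegree
      · have := hc f hf g hg hd h2
        omega
      · omega
    · push Not at hex
      exact fin_of_bound S 2 hex
  · rintro ⟨f, hf, g, hg, hf2, hg2, hne⟩ hfin
    obtain ⟨s, hs⟩ := (Submodule.fg_iff_finiteDimensional S).2 hfin
    have hmax : ∃ p ∈ S, ∀ q ∈ S, q.natDegree ≤ p.natDegree := by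
      have hsne : (s : Set ℝ[X]).Nonempty := by
        rw [Set.nonempty_iff_ne_empty]
        intro h0
        rw [h0, Submodule.span_empty] at hs
        subst hs
        rw [Submodule.mem_bot] at hf
        subst hf
        simp at hf2
      obtain ⟨p, hp, hpm⟩ := exists_degree_le_of_mem_span_of_finite s.finite_toSet hsne
      refine ⟨p, hs ▸ Submodule.subset_span hp, fun q hq => natDegree_le_natDegree (hpm q (hs ▸ hq))⟩
    obtain ⟨p, hp, hpm⟩ := hmax
    have key : ∀ q ∈ S, 2 ≤ q.natDegree → p.natDegree ≠ q.natDegree → False := by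
      intro q hq hq2 hpq
      have hp2 := hpm q hq
      have h1 := le_natDegree_of_ne_zero (bracket_coeff p q (by omega) hq2 hpq)
      have h2 := hpm _ (hclosed p hp q hq)
      omega
    by_cases h : p.natDegree = f.natDegree
    · exact key g hg hg2 (h ▸ hne)
    · exact key f hf hf2 h
end

section
/- Let f and g be nonzero polynomials over ℝ with d₁ := natDegree f, d₂ := natDegree g, and d₁ > d₂ ≥ 2. Define h₀ := f and h_{k+1} := ⁅h_k, g⁆ = h_k·g′ − g·h_k′. Then for every natural number k, h_k is nonzero and natDegree h_k = d₁ + k·(d₂ − 1); in particular the degrees of the iterated brackets are strictly increasing and unbounded. -/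
open Polynomial

theorem bracket_aux_s6 (p g : ℝ[X]) (n m : ℕ) (hp : p.natDegree = n + 1)
    (hg : g.natDegree = m + 1) (hnm : m < n) :
    (p * derivative g - g * derivative p) ≠ 0 ∧
    (p * derivative g - g * derivative p).natDegree = n + 1 + m := by
  have hp' : (derivative p).natDegree ≤ n := by
    have := natDegree_derivative_le p
    omega
  have hg' : (derivative g).natDegree ≤ m := by
    have := natDegree_derivative_le g
    omega
  have hp0 : p.coeff (n + 1) ≠ 0 := by
    rw [← hp]
    apply leadingCoeff_ne_zero.mpr
    rintro rfl
    simp at hp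
  have hg0 : g.coeff (m + 1) ≠ 0 := by
    rw [← hg]
    apply leadingCoeff_ne_zero.mpr
    rintro rfl
    simp at hg
  have c1 : (p * derivative g).coeff (n + 1 + m) = p.coeff (n + 1) * (derivative g).coeff m :=
    coeff_mul_add_eq_of_natDegree_le hp.le hg'
  have c2 : (g * derivative p).coeff (m + 1 + n) = g.coeff (m + 1) * (derivative p).coeff n :=
    coeff_mul_add_eq_of_natDegree_le hg.le hp'
  have hc : (p * derivative g - g * derivative p).coeff (n + 1 + m) ≠ 0 := by
    rw [coeff_sub, c1, show n + 1 + m = m + 1 + n by ring, c2, coeff_derivative, coeff_derivative]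
    have e : p.coeff (n + 1) * (g.coeff (m + 1) * ((m : ℝ) + 1)) -
        g.coeff (m + 1) * (p.coeff (n + 1) * ((n : ℝ) + 1)) =
        p.coeff (n + 1) * g.coeff (m + 1) * ((m : ℝ) - n) := by ring
    rw [e]
    have : (m : ℝ) < n := by exact_mod_cast hnm
    exact mul_ne_zero (mul_ne_zero hp0 hg0) (by linarith)
  refine ⟨fun h => hc (by rw [h]; simp), ?_⟩
  apply natDegree_eq_of_le_of_coeff_ne_zero _ hc
  apply natDegree_sub_le_of_le (m := n + 1 + m) |> fun h => (h _ _).trans (max_self _).le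
  · exact natDegree_mul_le_of_le hp.le hg'
  · exact (natDegree_mul_le_of_le hg.le hp').trans (by omega)

theorem iterated_bracket_degrees
    (f g : ℝ[X]) (hf : f ≠ 0) (hg : g ≠ 0)
    (d₁ d₂ : ℕ) (hd₁ : d₁ = f.natDegree) (hd₂ : d₂ = g.natDegree)
    (h21 : d₂ < d₁) (h2 : 2 ≤ d₂)
    (h : ℕ → ℝ[X]) (h0 : h 0 = f)
    (hrec : ∀ k, h (k + 1) = h k * derivative g - g * derivative (h k)) :
    (∀ k, h k ≠ 0 ∧ (h k).natDegree = d₁ + k * (d₂ - 1)) ∧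
    (∀ k, (h k).natDegree < (h (k + 1)).natDegree) ∧
    (∀ N : ℕ, ∃ k, N < (h k).natDegree) := by
  have key : ∀ k, h k ≠ 0 ∧ (h k).natDegree = d₁ + k * (d₂ - 1) := by
    intro k
    induction k with
    | zero => simp [h0, hf, hd₁]
    | succ k ih =>
      obtain ⟨m, rfl⟩ : ∃ m, d₂ = m + 1 := ⟨d₂ - 1, by omega⟩
      obtain ⟨n, rfl⟩ : ∃ n, d₁ = n + 1 := ⟨d₁ - 1, by omega⟩
      simp only [Nat.add_sub_cancel] at ih ⊢
      have := bracket_aux_s6 (h k) g (n + k * m) m (by rw [ih.2]; ring) hd₂.symm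
        (by have := Nat.zero_le (k * m); omega)
      rw [hrec]
      exact ⟨this.1, by rw [this.2]; ring⟩
  refine ⟨key, fun k => ?_, fun N => ⟨N, ?_⟩⟩
  · rw [(key k).2, (key (k + 1)).2, Nat.add_mul]
    omega
  · rw [(key N).2]
    have : N * 1 ≤ N * (d₂ - 1) := Nat.mul_le_mul_left N (by omega)
    omega
end

section
/- Let a₀, a₁, a₂ : ℝ → ℝ and let x₁, x₂, x₃, x₄ : ℝ → ℝ be four solutions of the Riccati equation on an open interval I, i.e., for each i and each t ∈ I, xᵢ has derivative a₀(t) + a₁(t)·xᵢ(t) + a₂(t)·xᵢ(t)² at t. Assume that for all t ∈ I, x₁(t) ≠ x₂(t) and x₄(t) ≠ x₃(t). Then the cross-ratio function t ↦ ((x₄(t) − x₁(t))·(x₂(t) − x₃(t))) / ((x₁(t) − x₂(t))·(x₄(t) − x₃(t))) is constant on I. -/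
theorem riccati_cross_ratio_constant
    (a₀ a₁ a₂ : ℝ → ℝ) (p q : ℝ) (x₁ x₂ x₃ x₄ : ℝ → ℝ)
    (h₁ : ∀ t ∈ Set.Ioo p q,
      HasDerivAt x₁ (a₀ t + a₁ t * x₁ t + a₂ t * (x₁ t) ^ 2) t)
    (h₂ : ∀ t ∈ Set.Ioo p q,
      HasDerivAt x₂ (a₀ t + a₁ t * x₂ t + a₂ t * (x₂ t) ^ 2) t)
    (h₃ : ∀ t ∈ Set.Ioo p q,
      HasDerivAt x₃ (a₀ t + a₁ t * x₃ t + a₂ t * (x₃ t) ^ 2) t)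
    (h₄ : ∀ t ∈ Set.Ioo p q,
      HasDerivAt x₄ (a₀ t + a₁ t * x₄ t + a₂ t * (x₄ t) ^ 2) t)
    (h12 : ∀ t ∈ Set.Ioo p q, x₁ t ≠ x₂ t)
    (h43 : ∀ t ∈ Set.Ioo p q, x₄ t ≠ x₃ t) :
    ∃ C : ℝ, ∀ t ∈ Set.Ioo p q,
      ((x₄ t - x₁ t) * (x₂ t - x₃ t)) / ((x₁ t - x₂ t) * (x₄ t - x₃ t)) = C := by
  have key : ∀ t ∈ Set.Ioo p q, HasDerivAt (fun t =>
      ((x₄ t - x₁ t) * (x₂ t - x₃ t)) / ((x₁ t - x₂ t) * (x₄ t - x₃ t))) 0 t := by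
    intro t ht
    have a := sub_ne_zero.2 (h12 t ht)
    have b := sub_ne_zero.2 (h43 t ht)
    have h := (((h₄ t ht).fun_sub (h₁ t ht)).fun_mul ((h₂ t ht).fun_sub (h₃ t ht))).fun_div
      (((h₁ t ht).fun_sub (h₂ t ht)).fun_mul ((h₄ t ht).fun_sub (h₃ t ht))) (mul_ne_zero a b)
    refine h.congr_deriv ?_
    rw [div_eq_zero_iff]
    left
    ring
  exact isOpen_Ioo.exists_is_const_of_deriv_eq_zero isPreconnected_Ioo
    (fun t ht => (key t ht).differentiableAt.differentiableWithinAt)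
    (fun t ht => (key t ht).deriv)
end

section
/- Let h, a₀, a₁, a₂ be real numbers and let (x, x′), (y, y′), (z, z′), (w, w′) be pairs of real numbers each satisfying the partially implicit Euler step s′ − s = h·(a₀ + a₁·s + a₂·s·s′). Assume 1 − h·a₂·s ≠ 0 for each s ∈ {x, y, z, w}, and assume x − y ≠ 0, w − z ≠ 0, x′ − y′ ≠ 0, and w′ − z′ ≠ 0. Then ((w′ − x′)·(y′ − z′)) / ((x′ − y′)·(w′ − z′)) = ((w − x)·(y − z)) / ((x − y)·(w − z)). -/
theorem step_diff (h a₀ a₁ a₂ s s' t t' : ℝ)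
    (hs : s' - s = h * (a₀ + a₁ * s + a₂ * s * s'))
    (ht : t' - t = h * (a₀ + a₁ * t + a₂ * t * t')) :
    (s' - t') * ((1 - h * a₂ * s) * (1 - h * a₂ * t)) =
      (1 + h * a₁ + h * a₂ * (h * a₀)) * (s - t) := by
  linear_combination (1 - h * a₂ * t) * hs - (1 - h * a₂ * s) * ht

theorem implicit_euler_preserves_cross_ratio
    (h a₀ a₁ a₂ : ℝ) (x x' y y' z z' w w' : ℝ)
    (hx : x' - x = h * (a₀ + a₁ * x + a₂ * x * x'))
    (hy : y' - y = h * (a₀ + a₁ * y + a₂ * y * y'))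
    (hz : z' - z = h * (a₀ + a₁ * z + a₂ * z * z'))
    (hw : w' - w = h * (a₀ + a₁ * w + a₂ * w * w'))
    (hxd : 1 - h * a₂ * x ≠ 0) (hyd : 1 - h * a₂ * y ≠ 0)
    (hzd : 1 - h * a₂ * z ≠ 0) (hwd : 1 - h * a₂ * w ≠ 0)
    (hxy : x - y ≠ 0) (hwz : w - z ≠ 0)
    (hxy' : x' - y' ≠ 0) (hwz' : w' - z' ≠ 0) :
    ((w' - x') * (y' - z')) / ((x' - y') * (w' - z')) =
      ((w - x) * (y - z)) / ((x - y) * (w - z)) := by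
  have e1 := step_diff h a₀ a₁ a₂ w w' x x' hw hx
  have e2 := step_diff h a₀ a₁ a₂ y y' z z' hy hz
  have e3 := step_diff h a₀ a₁ a₂ x x' y y' hx hy
  have e4 := step_diff h a₀ a₁ a₂ w w' z z' hw hz
  rw [div_eq_div_iff (mul_ne_zero hxy' hwz') (mul_ne_zero hxy hwz)]
  have e12 := congrArg₂ (· * ·) e1 e2
  have e34 := congrArg₂ (· * ·) e3 e4
  apply mul_right_cancel₀ (mul_ne_zero (mul_ne_zero hwd hxd) (mul_ne_zero hyd hzd))
  linear_combination ((x - y) * (w - z)) * e12 - ((w - x) * (y - z)) * e34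
end

section
/- Let F₁ : ℝ² → ℝ be given by F₁(w, v) = F₂((w − v)/(v·(w + 1))) for a differentiable function F₂ : ℝ → ℝ. Then at every point (w, v) with v ≠ 0 and w ≠ −1, F₁ satisfies the first-order linear partial differential equation (w + 1)·w·∂F₁/∂w + (v + 1)·v·∂F₁/∂v = 0. -/
theorem superposition_pde_solution
    (F₂ : ℝ → ℝ) (hF₂ : Differentiable ℝ F₂)
    (w v : ℝ) (hv : v ≠ 0) (hw : w ≠ -1) :
    (w + 1) * w * deriv (fun s => F₂ ((s - v) / (v * (s + 1)))) w
      + (v + 1) * v * deriv (fun s => F₂ ((w - s) / (s * (w + 1)))) v = 0 := by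
  have hw1 : w + 1 ≠ 0 := fun h => hw (by linarith)
  have h1 : HasDerivAt (fun s : ℝ => (s - v) / (v * (s + 1)))
      ((1 * (v * (w + 1)) - (w - v) * (v * 1)) / (v * (w + 1)) ^ 2) w :=
    ((hasDerivAt_id' w).sub_const v).fun_div
      (((hasDerivAt_id' w).add_const 1).const_mul v) (mul_ne_zero hv hw1)
  have h2 : HasDerivAt (fun s : ℝ => (w - s) / (s * (w + 1)))
      (((-1) * (v * (w + 1)) - (w - v) * (1 * (w + 1))) / (v * (w + 1)) ^ 2) v :=
    ((hasDerivAt_id' v).const_sub w).fun_div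
      ((hasDerivAt_id' v).mul_const (w + 1)) (mul_ne_zero hv hw1)
  have hF := (hF₂ ((w - v) / (v * (w + 1)))).hasDerivAt
  have e1 := (HasDerivAt.comp w hF h1).deriv
  have e2 := (HasDerivAt.comp v hF h2).deriv
  simp only [Function.comp_def] at e1 e2
  rw [e1, e2]
  generalize deriv F₂ _ = D
  field_simp
  ring
end
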